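/- arXiv:1402.4397 — 3 statements merged into one kernel-verified Lean document; each statement's English description precedes it below -/
import Mathlib

section
/- Let S and T be commutative atomic cancellative monoids and let φ: S → T be an isoatomic weak transfer homomorphism. Then φ induces an isomorphism of the associated reduced monoids: the map sending the class of a to the class of φ(a) is a monoid isomorphism from S modulo associates onto T modulo associates (i.e., Associates S ≅ Associates T). -/
def MAtom {H : Type*} [Monoid H] (u : H) : Prop :=
  ¬ IsUnit u ∧ ∀ a b : H, u = a * b → IsUnit a ∨ IsUnit b

def TAssoc {H : Type*} [Monoid H] (a b : H) : Prop :=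
  ∃ ε η : Hˣ, b = (ε : H) * a * (η : H)

def Atomic (H : Type*) [Monoid H] : Prop :=
  ∀ a : H, ¬ IsUnit a → ∃ l : List H, l ≠ [] ∧ (∀ u ∈ l, MAtom u) ∧ a = l.prod

def T1Cond {H T : Type*} [Monoid H] [Monoid T] (φ : H →* T) : Prop :=
  (∀ t : T, ∃ (ε η : Tˣ) (a : H), t = (ε : T) * φ a * (η : T)) ∧
    ∀ a : H, IsUnit (φ a) ↔ IsUnit a

def IsTransferHom {H T : Type*} [Monoid H] [Monoid T] (φ : H →* T) : Prop :=
  T1Cond φ ∧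
    ∀ (a : H) (b₁ b₂ : T), φ a = b₁ * b₂ →
      ∃ (a₁ a₂ : H) (ε : Tˣ), a = a₁ * a₂ ∧ φ a₁ = b₁ * ((ε⁻¹ : Tˣ) : T) ∧ φ a₂ = (ε : T) * b₂

def IsWeakTransferHom {H T : Type*} [Monoid H] [Monoid T] (φ : H →* T) : Prop :=
  T1Cond φ ∧
    ∀ (a : H) (n : ℕ), 0 < n → ∀ v : Fin n → T, (∀ i, MAtom (v i)) →
      φ a = (List.ofFn v).prod →
      ∃ (u : Fin n → H) (σ : Equiv.Perm (Fin n)),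
        (∀ i, MAtom (u i)) ∧ a = (List.ofFn u).prod ∧ ∀ i, TAssoc (φ (u i)) (v (σ i))

def IsIsoatomic {H T : Type*} [Monoid H] [Monoid T] (φ : H →* T) : Prop :=
  ∀ u v : H, MAtom u → MAtom v → TAssoc (φ u) (φ v) → TAssoc u v

def lengthsOf {H : Type*} [Monoid H] (a : H) : Set ℕ :=
  {n | (n = 0 ∧ IsUnit a) ∨
    ∃ l : List H, l ≠ [] ∧ (∀ u ∈ l, MAtom u) ∧ a = l.prod ∧ l.length = n}

/-!
Surjectivity on associate classes is condition (T1). For injectivity, suppose `φ a` and `φ b` are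
associated, and write their common class as a product of atoms of `T`. Condition (WT2) lifts this
one factorization to factorizations of both `a` and `b` into atoms whose images are associated in
pairs, and isoatomicity makes the atoms themselves associated in pairs. Since (WT2) speaks of equal
rather than associated products, a stray unit is first absorbed into one of the atoms.
-/

theorem mAtom_iff_irreducible {H : Type*} [Monoid H] {u : H} : MAtom u ↔ Irreducible u :=
  irreducible_iff.symm

theorem tAssoc_iff_associated {H : Type*} [CommMonoid H] {a b : H} :
    TAssoc a b ↔ Associated a b := by
  constructor
  · rintro ⟨ε, η, rfl⟩
    exact ⟨ε * η, by rw [Units.val_mul, mul_left_comm, mul_assoc]⟩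
  · rintro ⟨η, rfl⟩
    exact ⟨1, η, by rw [Units.val_one, one_mul]⟩

/-- The homomorphism induced on associate classes by a homomorphism of commutative monoids; in the
language of factorization theory, the homomorphism of the associated reduced monoids. -/
def associatesMap {M N : Type*} [CommMonoid M] [CommMonoid N] (φ : M →* N) :
    Associates M →* Associates N where
  toFun := Quotient.map φ fun _ _ h => h.map φ
  map_one' := congrArg Associates.mk (map_one φ)
  map_mul' := by
    rintro ⟨a⟩ ⟨b⟩
    exact congrArg Associates.mk (map_mul φ a b)

@[simp]
theorem associatesMap_mk {M N : Type*} [CommMonoid M] [CommMonoid N] (φ : M →* N) (a : M) :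
    associatesMap φ (Associates.mk a) = Associates.mk (φ a) :=
  rfl

theorem exists_associated_and_prod_eq {ι M : Type*} [Fintype ι] [Nonempty ι] [CommMonoid M]
    {v : ι → M} {t : M} (h : Associated (∏ i, v i) t) :
    ∃ w : ι → M, (∀ i, Associated (v i) (w i)) ∧ ∏ i, w i = t := by
  classical
  obtain ⟨ε, rfl⟩ := h
  let f : ι → Mˣ := Pi.mulSingle (Classical.arbitrary ι) ε
  refine ⟨fun i => v i * f i, fun i => ⟨f i, rfl⟩, ?_⟩
  rw [Finset.prod_mul_distrib, ← Units.coe_prod, Fintype.prod_pi_mulSingle']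

theorem Atomic.exists_associated_prod {H : Type*} [CommMonoid H] (hH : Atomic H) (a : H) :
    ∃ (n : ℕ) (v : Fin n → H), (∀ i, Irreducible (v i)) ∧ Associated a (∏ i, v i) := by
  by_cases ha : IsUnit a
  · exact ⟨0, Fin.elim0, fun i => i.elim0, by simpa using ha⟩
  · obtain ⟨l, -, hl, rfl⟩ := hH a ha
    refine ⟨l.length, l.get, fun i => mAtom_iff_irreducible.1 (hl _ (l.get_mem i)), ?_⟩
    rw [← List.prod_ofFn, List.ofFn_get]

section

variable {S T : Type*} [CommMonoid S] [CommMonoid T] {φ : S →* T}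

theorem T1Cond.associatesMap_surjective (hφ : T1Cond φ) :
    Function.Surjective (associatesMap φ) := by
  rintro ⟨t⟩
  obtain ⟨ε, η, a, ht⟩ := hφ.1 t
  exact ⟨Associates.mk a,
    Associates.mk_eq_mk_iff_associated.2 (tAssoc_iff_associated.1 ⟨ε, η, ht⟩)⟩

theorem IsIsoatomic.associated (hi : IsIsoatomic φ) {u v : S} (hu : Irreducible u)
    (hv : Irreducible v) (h : Associated (φ u) (φ v)) : Associated u v :=
  tAssoc_iff_associated.1 <| hi u v (mAtom_iff_irreducible.2 hu) (mAtom_iff_irreducible.2 hv)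
    (tAssoc_iff_associated.2 h)

theorem IsWeakTransferHom.exists_factorization_of_prod_eq (hw : IsWeakTransferHom φ) {a : S}
    {n : ℕ} (hn : 0 < n) {v : Fin n → T} (hv : ∀ i, Irreducible (v i)) (h : φ a = ∏ i, v i) :
    ∃ u : Fin n → S, (∀ i, Irreducible (u i)) ∧ a = ∏ i, u i ∧
      ∀ i, Associated (φ (u i)) (v i) := by
  obtain ⟨u, σ, hu, hau, huv⟩ := hw.2 a n hn v (fun i => mAtom_iff_irreducible.2 (hv i))
    (by rw [h, List.prod_ofFn])
  refine ⟨u ∘ σ.symm, fun i => mAtom_iff_irreducible.1 (hu _), ?_, fun i => ?_⟩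
  · rw [hau, List.prod_ofFn]
    exact (Equiv.prod_comp σ.symm u).symm
  · simpa using tAssoc_iff_associated.1 (huv (σ.symm i))

theorem IsWeakTransferHom.exists_factorization_of_associated (hw : IsWeakTransferHom φ) {a : S}
    {n : ℕ} {v : Fin n → T} (hv : ∀ i, Irreducible (v i)) (h : Associated (φ a) (∏ i, v i)) :
    ∃ u : Fin n → S, (∀ i, Irreducible (u i)) ∧ Associated a (∏ i, u i) ∧
      ∀ i, Associated (φ (u i)) (v i) := by
  obtain rfl | hn := n.eq_zero_or_pos
  · have ha : IsUnit a := (hw.1.2 a).1 (by simpa using h)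
    exact ⟨Fin.elim0, fun i => i.elim0, by simpa using ha, fun i => i.elim0⟩
  · have : Nonempty (Fin n) := ⟨⟨0, hn⟩⟩
    obtain ⟨w, hvw, hw_prod⟩ := exists_associated_and_prod_eq h.symm
    obtain ⟨u, hu, rfl, huw⟩ := hw.exists_factorization_of_prod_eq hn
      (fun i => (hvw i).irreducible (hv i)) hw_prod.symm
    exact ⟨u, hu, Associated.refl _, fun i => (huw i).trans (hvw i).symm⟩

theorem IsWeakTransferHom.associated_of_associated_map (hw : IsWeakTransferHom φ)
    (hT : Atomic T) (hi : IsIsoatomic φ) {a b : S} (hab : Associated (φ a) (φ b)) :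
    Associated a b := by
  obtain ⟨n, v, hv, hbv⟩ := hT.exists_associated_prod (φ b)
  obtain ⟨u, hu, hau, huv⟩ := hw.exists_factorization_of_associated hv (hab.trans hbv)
  obtain ⟨w, hw_irr, hbw, hwv⟩ := hw.exists_factorization_of_associated hv hbv
  have huw (i : Fin n) : Associated (u i) (w i) :=
    hi.associated (hu i) (hw_irr i) ((huv i).trans (hwv i).symm)
  calc
    Associated a (∏ i, u i) := hau
    Associated _ (∏ i, w i) := Associated.prod _ u w fun i _ => huw i
    Associated _ b := hbw.symm

theorem IsWeakTransferHom.associatesMap_injective (hw : IsWeakTransferHom φ) (hT : Atomic T)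
    (hi : IsIsoatomic φ) : Function.Injective (associatesMap φ) := by
  rintro ⟨a⟩ ⟨b⟩ h
  exact Associates.mk_eq_mk_iff_associated.2 <|
    hw.associated_of_associated_map hT hi (Associates.mk_eq_mk_iff_associated.1 h)

end

theorem associates_mulEquiv_of_isoatomic_weakTransfer_general {S T : Type*}
    [CommMonoid S] [CommMonoid T] (hT : Atomic T)
    (φ : S →* T) (hw : IsWeakTransferHom φ) (hi : IsIsoatomic φ) :
    ∃ e : Associates S ≃* Associates T,
      ∀ a : S, e (Associates.mk a) = Associates.mk (φ a) :=
  ⟨MulEquiv.ofBijective (associatesMap φ)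
    ⟨hw.associatesMap_injective hT hi, hw.1.associatesMap_surjective⟩, associatesMap_mk φ⟩

/-- An isoatomic weak transfer homomorphism between commutative atomic
cancellative monoids induces an isomorphism of the associated reduced monoids. -/
theorem associates_mulEquiv_of_isoatomic_weakTransfer {S T : Type*}
    [CancelCommMonoid S] [CancelCommMonoid T] (hS : Atomic S) (hT : Atomic T)
    (φ : S →* T) (hw : IsWeakTransferHom φ) (hi : IsIsoatomic φ) :
    ∃ e : Associates S ≃* Associates T,
      ∀ a : S, e (Associates.mk a) = Associates.mk (φ a) :=
  associates_mulEquiv_of_isoatomic_weakTransfer_general hT φ hw hi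
end

section
/- Let H and T be atomic cancellative monoids and let φ: H → T be an isoatomic weak transfer homomorphism, with extension φ_p to permutable factorizations. Then d_p(z, z') = d_p(φ_p(z), φ_p(z')) for any two permutable factorizations z, z' of the same element a ∈ H. In particular, the permutable catenary degrees coincide: c_p(H) = c_p(T). -/
structure RF (H : Type*) [Monoid H] where
  u : Hˣ
  l : List H

namespace RF

variable {H : Type*} [Monoid H]

def IsRigid (z : RF H) : Prop := ∀ x ∈ z.l, MAtom x

def prod (z : RF H) : H := (z.u : H) * z.l.prod

def len (z : RF H) : ℕ := z.l.length

def mul (z w : RF H) : RF H :=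
  match z.l with
  | [] => ⟨z.u * w.u, w.l⟩
  | a :: as =>
      ⟨z.u, ((a :: as).dropLast ++
        [(a :: as).getLast (List.cons_ne_nil a as) * (w.u : H)]) ++ w.l⟩

end RF

/-- The equivalence relation on rigid factorization data: same length, and the
atoms agree up to an interpolating family of units `δ`, with the unit part
absorbing `δ 0` and `δ` becoming trivial after the last atom. -/
def RFEq {H : Type*} [Monoid H] (z w : RF H) : Prop :=
  ∃ δ : ℕ → Hˣ,
    z.l.length = w.l.length ∧ δ z.l.length = 1 ∧ w.u = z.u * (δ 0)⁻¹ ∧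
    ∀ (i : ℕ) (hi : i < z.l.length) (hi' : i < w.l.length),
      w.l.get ⟨i, hi'⟩ = ((δ i : H)) * z.l.get ⟨i, hi⟩ * (((δ (i + 1))⁻¹ : Hˣ) : H)

/-- A distance on the rigid factorizations of `H` (axioms (D1)-(D5); (D1) is stated
in the strong form saying the distance vanishes on equivalent rigid factorizations,
which encodes well-definedness on the category of rigid factorizations). -/
structure IsDistance (H : Type*) [Monoid H] (d : RF H → RF H → ℕ) : Prop where
  d_eq : ∀ z w : RF H, z.IsRigid → w.IsRigid → RFEq z w → d z w = 0
  d_symm : ∀ z w : RF H, z.IsRigid → w.IsRigid → z.prod = w.prod → d z w = d w z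
  d_tri : ∀ z w v : RF H, z.IsRigid → w.IsRigid → v.IsRigid →
    z.prod = w.prod → w.prod = v.prod → d z v ≤ d z w + d w v
  d_mul_left : ∀ x z w : RF H, x.IsRigid → z.IsRigid → w.IsRigid → z.prod = w.prod →
    d (x.mul z) (x.mul w) = d z w
  d_mul_right : ∀ y z w : RF H, y.IsRigid → z.IsRigid → w.IsRigid → z.prod = w.prod →
    d (z.mul y) (w.mul y) = d z w
  d_len : ∀ z w : RF H, z.IsRigid → w.IsRigid → z.prod = w.prod →
    (z.len - w.len ≤ d z w ∧ w.len - z.len ≤ d z w) ∧ d z w ≤ max (max z.len w.len) 1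

/-- An `N`-chain of rigid factorizations of `a` between `z` and `w`, in distance `d`. -/
def IsNChain {H : Type*} [Monoid H] (d : RF H → RF H → ℕ) (a : H) (N : ℕ∞)
    (z w : RF H) : Prop :=
  ∃ (n : ℕ) (c : ℕ → RF H), c 0 = z ∧ c n = w ∧
    (∀ i ≤ n, (c i).IsRigid ∧ (c i).prod = a) ∧
    ∀ i < n, (d (c i) (c (i + 1)) : ℕ∞) ≤ N

/-- A monotone `N`-chain: in addition the lengths are non-decreasing or non-increasing. -/
def IsMonNChain {H : Type*} [Monoid H] (d : RF H → RF H → ℕ) (a : H) (N : ℕ∞)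
    (z w : RF H) : Prop :=
  ∃ (n : ℕ) (c : ℕ → RF H), c 0 = z ∧ c n = w ∧
    (∀ i ≤ n, (c i).IsRigid ∧ (c i).prod = a) ∧
    (∀ i < n, (d (c i) (c (i + 1)) : ℕ∞) ≤ N) ∧
    ((∀ i j, i ≤ j → j ≤ n → (c i).len ≤ (c j).len) ∨
      (∀ i j, i ≤ j → j ≤ n → (c j).len ≤ (c i).len))

/-- The catenary degree of `a` in distance `d`. -/
noncomputable def catenaryDeg {H : Type*} [Monoid H] (d : RF H → RF H → ℕ) (a : H) : ℕ∞ :=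
  sInf {N : ℕ∞ | ∀ z w : RF H, z.IsRigid → w.IsRigid → z.prod = a → w.prod = a →
    IsNChain d a N z w}

/-- The monotone catenary degree of `a` in distance `d`. -/
noncomputable def catenaryDegMon {H : Type*} [Monoid H] (d : RF H → RF H → ℕ) (a : H) : ℕ∞ :=
  sInf {N : ℕ∞ | ∀ z w : RF H, z.IsRigid → w.IsRigid → z.prod = a → w.prod = a →
    IsMonNChain d a N z w}

/-- The set of distances of a set of naturals. -/
def DeltaSet (L : Set ℕ) : Set ℕ :=
  {d | 0 < d ∧ ∃ l ∈ L, l + d ∈ L ∧ ∀ m ∈ L, l < m → m < l + d → False}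
/-- Two-sided associativity is an equivalence relation. -/
def assocSetoid (H : Type*) [Monoid H] : Setoid H where
  r := TAssoc
  iseqv := by
    constructor
    · intro a; exact ⟨1, 1, by simp⟩
    · rintro a b ⟨ε, η, rfl⟩
      exact ⟨ε⁻¹, η⁻¹, by simp [mul_assoc]⟩
    · rintro a b c ⟨ε, η, rfl⟩ ⟨ε', η', rfl⟩
      exact ⟨ε' * ε, η * η', by simp [mul_assoc]⟩

/-- Associativity classes of elements of `H`. -/
def AClass (H : Type*) [Monoid H] := Quotient (assocSetoid H)

def mkCls {H : Type*} [Monoid H] (a : H) : AClass H := Quotient.mk (assocSetoid H) a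

/-- The distance between two multisets: `max {card s - card (s ∩ t), card t - card (s ∩ t)}`. -/
noncomputable def mdist {α : Type*} (s t : Multiset α) : ℕ :=
  letI := Classical.decEq α
  max (Multiset.card s - Multiset.card (s ∩ t)) (Multiset.card t - Multiset.card (s ∩ t))

/-- The multiset of associativity classes of the entries of a list. -/
def clsList {H : Type*} [Monoid H] (l : List H) : Multiset (AClass H) :=
  ((l.map mkCls : List (AClass H)) : Multiset (AClass H))

/-- The permutable distance between two rigid factorizations. -/
noncomputable def dpRF {H : Type*} [Monoid H] (z w : RF H) : ℕ :=
  mdist (clsList z.l) (clsList w.l)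

/-- The permutable catenary degree of an element. -/
noncomputable def cpDeg {H : Type*} [Monoid H] (a : H) : ℕ∞ :=
  sInf {N : ℕ∞ | ∀ z w : RF H, z.IsRigid → w.IsRigid → z.prod = a → w.prod = a →
    ∃ (n : ℕ) (c : ℕ → RF H), c 0 = z ∧ c n = w ∧
      (∀ i ≤ n, (c i).IsRigid ∧ (c i).prod = a) ∧
      ∀ i < n, (dpRF (c i) (c (i + 1)) : ℕ∞) ≤ N}

/-- The permutable catenary degree of a monoid. -/
noncomputable def cpMon (H : Type*) [Monoid H] : ℕ∞ := ⨆ a : H, cpDeg a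

/-- The map induced on rigid factorization data by a monoid homomorphism. -/
def mapRF {H T : Type*} [Monoid H] [Monoid T] (φ : H →* T) (z : RF H) : RF T :=
  ⟨Units.map φ z.u, z.l.map φ⟩

/-!
Up to `d_p = 0`, a rigid factorization of `a` is nothing but the multiset of associativity classes
of its atoms, and `d_p` is the multiset distance `mdist`. On these multisets `φ_p` is `Multiset.map`
of the map that `φ` induces on classes. That map is injective on classes of atoms because `φ` is
isoatomic, so `φ_p` preserves distances. By (WT2), which returns the prescribed atoms up to order
and associates, every permutable factorization of `φ a` comes from one of `a`; as `T` is atomic,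
applying this to an atom `u` of `H` shows that `φ u` is an atom, so `φ_p` maps the permutable
factorizations of `a` onto those of `φ a`. A catenary degree only depends on the set of
factorizations and its distance.
-/

section AssociativityClasses

variable {H T : Type*} [Monoid H] [Monoid T]

theorem TAssoc.refl (a : H) : TAssoc a a := (assocSetoid H).refl a

theorem TAssoc.symm {a b : H} (h : TAssoc a b) : TAssoc b a := (assocSetoid H).symm h

theorem TAssoc.trans {a b c : H} (hab : TAssoc a b) (hbc : TAssoc b c) : TAssoc a c :=
  (assocSetoid H).trans hab hbc

theorem TAssoc.map (φ : H →* T) {a b : H} (h : TAssoc a b) : TAssoc (φ a) (φ b) := by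
  obtain ⟨ε, η, rfl⟩ := h
  exact ⟨Units.map φ ε, Units.map φ η, by simp⟩

theorem tassoc_one_left_iff {a : H} : TAssoc 1 a ↔ IsUnit a := by
  constructor
  · rintro ⟨ε, η, rfl⟩
    simp
  · rintro ⟨ε, rfl⟩
    exact ⟨ε, 1, by simp⟩

theorem mkCls_eq_mkCls {a b : H} : mkCls a = mkCls b ↔ TAssoc a b :=
  Quotient.eq (r := assocSetoid H)

theorem mkCls_units_mul_mul_units (ε η : Hˣ) (a : H) : mkCls ((ε : H) * a * η) = mkCls a :=
  (mkCls_eq_mkCls.2 ⟨ε, η, rfl⟩).symm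

/-- The map on associativity classes induced by a monoid homomorphism. -/
def AClass.map (φ : H →* T) : AClass H → AClass T :=
  Quotient.map (sa := assocSetoid H) (sb := assocSetoid T) φ fun _ _ => TAssoc.map φ

theorem AClass.map_mkCls (φ : H →* T) (a : H) : AClass.map φ (mkCls a) = mkCls (φ a) := rfl

theorem clsList_cons (a : H) (l : List H) : clsList (a :: l) = mkCls a ::ₘ clsList l := rfl

theorem clsList_map (φ : H →* T) (l : List H) :
    clsList (l.map φ) = (clsList l).map (AClass.map φ) := by
  simp [clsList, Function.comp_def, AClass.map_mkCls]

theorem clsList_ofFn_eq_of_tassoc_perm {n : ℕ} {u v : Fin n → H} (σ : Equiv.Perm (Fin n))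
    (h : ∀ i, TAssoc (u i) (v (σ i))) : clsList (List.ofFn u) = clsList (List.ofFn v) := by
  have hcls : mkCls ∘ u = (mkCls ∘ v) ∘ σ := funext fun i => mkCls_eq_mkCls.2 (h i)
  simp only [clsList, List.map_ofFn, hcls]
  exact Multiset.coe_eq_coe.2 (σ.ofFn_comp_perm (mkCls ∘ v))

theorem exists_clsList_eq_prod_eq_units_mul_mul_units :
    ∀ {l : List H}, l ≠ [] → ∀ ε η : Hˣ,
      ∃ l' : List H, clsList l' = clsList l ∧ l'.prod = ε * l.prod * η
  | [x], _, ε, η =>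
    ⟨[ε * x * η], by simp only [clsList_cons, mkCls_units_mul_mul_units], by simp⟩
  | x :: y :: l, _, ε, η => by
    obtain ⟨l', hcls, hprod⟩ :=
      exists_clsList_eq_prod_eq_units_mul_mul_units (List.cons_ne_nil y l) 1 η
    refine ⟨(ε * x) :: l', ?_, ?_⟩
    · have hx : mkCls ((ε : H) * x) = mkCls x := by simpa using mkCls_units_mul_mul_units ε 1 x
      rw [clsList_cons, hx, hcls, ← clsList_cons]
    · simp [hprod, mul_assoc]

theorem TAssoc.exists_clsList_eq_prod_eq {l : List H} {a : H} (h : TAssoc l.prod a)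
    (hl : l ≠ []) : ∃ l' : List H, clsList l' = clsList l ∧ l'.prod = a := by
  obtain ⟨ε, η, rfl⟩ := h
  exact exists_clsList_eq_prod_eq_units_mul_mul_units hl ε η

end AssociativityClasses

section Atoms

variable {H : Type*} [Monoid H]

theorem MAtom.of_tassoc {u v : H} (hu : MAtom u) (h : TAssoc u v) : MAtom v := by
  obtain ⟨ε, η, rfl⟩ := h
  refine ⟨by simpa using hu.1, fun a b hab => ?_⟩
  have hu_eq : u = (↑ε⁻¹ * a) * (b * ↑η⁻¹) := by
    calc u = ↑ε⁻¹ * (ε * u * η) * ↑η⁻¹ := by simp [mul_assoc]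
      _ = (↑ε⁻¹ * a) * (b * ↑η⁻¹) := by rw [hab]; simp only [mul_assoc]
  simpa using hu.2 _ _ hu_eq

theorem MAtom.not_isUnit_mul {u : H} (hu : MAtom u) (b : H) : ¬ IsUnit (u * b) := by
  intro hub
  obtain ⟨c, hc⟩ := hub.exists_right_inv
  have hright : u * (b * c) = 1 := by rw [← mul_assoc, hc]
  -- The second factor must be a unit, so `u` is also left invertible.
  have hfactor : u = u * (b * c * u) := by rw [← mul_assoc, hright, one_mul]
  obtain ⟨d, hd⟩ := ((hu.2 _ _ hfactor).resolve_left hu.1).exists_left_inv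
  exact hu.1 (isUnit_iff_exists_and_exists.2
    ⟨⟨b * c, hright⟩, ⟨d * (b * c), by rw [mul_assoc, hd]⟩⟩)

theorem MAtom.exists_eq_singleton {l : List H} (hl : ∀ u ∈ l, MAtom u) (hprod : MAtom l.prod) :
    ∃ u, l = [u] := by
  match l with
  | [] => exact absurd isUnit_one hprod.1
  | [u] => exact ⟨u, rfl⟩
  | u :: v :: l =>
    have hu : ¬ IsUnit u := (hl u (by simp)).1
    have hv : ¬ IsUnit (v * l.prod) := (hl v (by simp)).not_isUnit_mul l.prod
    exact ((hprod.2 u (v * l.prod) (by simp)).elim hu hv).elim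

/-- The associativity classes of the atoms of `H`. -/
def atomClasses (H : Type*) [Monoid H] : Set (AClass H) := mkCls '' {u | MAtom u}

theorem mkCls_mem_atomClasses {u : H} : mkCls u ∈ atomClasses H ↔ MAtom u := by
  refine ⟨?_, fun hu => ⟨u, hu, rfl⟩⟩
  rintro ⟨v, hv, hvu⟩
  exact hv.of_tassoc (mkCls_eq_mkCls.1 hvu)

theorem forall_mem_clsList_mem_atomClasses {l : List H} :
    (∀ c ∈ clsList l, c ∈ atomClasses H) ↔ ∀ u ∈ l, MAtom u := by
  simp [clsList, mkCls_mem_atomClasses]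

theorem forall_mAtom_of_clsList_eq {l l' : List H} (hl : ∀ u ∈ l, MAtom u)
    (h : clsList l' = clsList l) : ∀ u ∈ l', MAtom u := by
  rwa [← forall_mem_clsList_mem_atomClasses, h, forall_mem_clsList_mem_atomClasses]

end Atoms

section PermutableFactorizations

variable {H : Type*} [Monoid H]

/-- The rigid factorizations `Z*(a)`, as a set of data not identified along `RFEq`. -/
def rigidFactorizations (a : H) : Set (RF H) := {z | z.IsRigid ∧ z.prod = a}

/-- The permutable factorizations `Z_p(a)`, each encoded as the multiset of associativity classes of
its atoms; units are absorbed by asking for `a` only up to associates. -/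
def permFactorizations (a : H) : Set (Multiset (AClass H)) :=
  {s | ∃ l : List H, (∀ u ∈ l, MAtom u) ∧ TAssoc l.prod a ∧ clsList l = s}

theorem mem_atomClasses_of_mem_permFactorizations {a : H} {s : Multiset (AClass H)}
    (hs : s ∈ permFactorizations a) : ∀ c ∈ s, c ∈ atomClasses H := by
  obtain ⟨l, hl, -, rfl⟩ := hs
  exact forall_mem_clsList_mem_atomClasses.2 hl

theorem TAssoc.permFactorizations_eq {a b : H} (h : TAssoc a b) :
    permFactorizations a = permFactorizations b := by
  ext s
  constructor
  · rintro ⟨l, hl, hla, rfl⟩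
    exact ⟨l, hl, hla.trans h, rfl⟩
  · rintro ⟨l, hl, hlb, rfl⟩
    exact ⟨l, hl, hlb.trans h.symm, rfl⟩

theorem permFactorizations_eq_image (a : H) :
    permFactorizations a = (fun z : RF H => clsList z.l) '' rigidFactorizations a := by
  ext s
  constructor
  · rintro ⟨l, hl, hla, rfl⟩
    rcases eq_or_ne l [] with rfl | hne
    · obtain ⟨ε, rfl⟩ := tassoc_one_left_iff.1 hla
      exact ⟨⟨ε, []⟩, ⟨hl, by simp [RF.prod]⟩, rfl⟩
    · obtain ⟨l', hcls, hprod⟩ := hla.exists_clsList_eq_prod_eq hne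
      exact ⟨⟨1, l'⟩, ⟨forall_mAtom_of_clsList_eq hl hcls, by simp [RF.prod, hprod]⟩, hcls⟩
  · rintro ⟨z, ⟨hz, rfl⟩, rfl⟩
    exact ⟨z.l, hz, ⟨z.u, 1, by simp [RF.prod]⟩, rfl⟩

theorem Atomic.permFactorizations_nonempty (hH : Atomic H) (a : H) :
    (permFactorizations a).Nonempty := by
  by_cases ha : IsUnit a
  · exact ⟨_, [], by simp, tassoc_one_left_iff.2 ha, rfl⟩
  · obtain ⟨l, -, hl, rfl⟩ := hH a ha
    exact ⟨_, l, hl, .refl _, rfl⟩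

theorem MAtom.permFactorizations_eq {u : H} (hu : MAtom u) :
    permFactorizations u = {{mkCls u}} := by
  ext s
  constructor
  · rintro ⟨l, hl, hlu, rfl⟩
    obtain ⟨v, rfl⟩ := (hu.of_tassoc hlu.symm).exists_eq_singleton hl
    have hvu : TAssoc v u := by simpa using hlu
    simp [clsList, mkCls_eq_mkCls.2 hvu]
  · rintro rfl
    exact ⟨[u], by simpa using hu, by simpa using .refl u, rfl⟩

end PermutableFactorizations

section CatenaryDegree

open Relation

variable {X Y : Type*}

/-- One step of an `N`-chain inside `S`, with respect to the distance `d`. -/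
def StepOn (d : X → X → ℕ) (S : Set X) (N : ℕ∞) (x y : X) : Prop :=
  x ∈ S ∧ y ∈ S ∧ (d x y : ℕ∞) ≤ N

/-- The catenary degree of a set `S` with respect to the distance `d`, so that a monoid element has
the catenary degree of its set of factorizations. -/
noncomputable def catenaryDegOn (d : X → X → ℕ) (S : Set X) : ℕ∞ :=
  sInf {N | ∀ x ∈ S, ∀ y ∈ S, ReflTransGen (StepOn d S N) x y}

theorem reflTransGen_stepOn_image {d : X → X → ℕ} {d' : Y → Y → ℕ} {f : X → Y} {S : Set X}
    (hself : ∀ y, d' y y = 0) (hf : ∀ x ∈ S, ∀ y ∈ S, d' (f x) (f y) = d x y) {N : ℕ∞}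
    {x y : X} (hx : x ∈ S) (hy : y ∈ S) :
    ReflTransGen (StepOn d' (f '' S) N) (f x) (f y) ↔ ReflTransGen (StepOn d S N) x y := by
  have step {v w : X} (hv : v ∈ S) (hw : w ∈ S) (h : (d' (f v) (f w) : ℕ∞) ≤ N) :
      StepOn d S N v w := ⟨hv, hw, by rwa [← hf v hv w hw]⟩
  constructor
  · intro h
    generalize hp : f y = p at h
    induction h generalizing y with
    | refl => exact .single (step hx hy (by simp [hp, hself]))
    | tail _ hlast ih =>
      obtain ⟨⟨w, hw, rfl⟩, -, hwp⟩ := hlast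
      exact (ih hw rfl).tail (step hw hy (by rwa [hp]))
  · refine fun h => h.lift f ?_
    rintro v w ⟨hv, hw, hvw⟩
    exact ⟨⟨v, hv, rfl⟩, ⟨w, hw, rfl⟩, by rwa [hf v hv w hw]⟩

theorem catenaryDegOn_image {d : X → X → ℕ} {d' : Y → Y → ℕ} {f : X → Y} {S : Set X}
    (hself : ∀ y, d' y y = 0) (hf : ∀ x ∈ S, ∀ y ∈ S, d' (f x) (f y) = d x y) :
    catenaryDegOn d' (f '' S) = catenaryDegOn d S := by
  unfold catenaryDegOn
  congr 1
  ext N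
  simp only [Set.mem_ofPred_eq, Set.forall_mem_image]
  exact forall₂_congr fun x hx => forall₂_congr fun y hy =>
    reflTransGen_stepOn_image hself hf hx hy

variable {H : Type*} [Monoid H]

theorem isNChain_iff_reflTransGen {d : RF H → RF H → ℕ} {a : H} {N : ℕ∞} {z w : RF H}
    (hz : z ∈ rigidFactorizations a) :
    IsNChain d a N z w ↔ ReflTransGen (StepOn d (rigidFactorizations a) N) z w := by
  constructor
  · rintro ⟨n, c, rfl, rfl, hc, hd⟩
    exact ReflTransGen.lift c (fun _ _ h => h) _ _ <| reflTransGen_of_succ_of_le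
      (fun i j => StepOn d (rigidFactorizations a) N (c i) (c j))
      (fun i hi => ⟨hc i hi.2.le, hc (i + 1) hi.2, hd i hi.2⟩) n.zero_le
  · intro h
    induction h using ReflTransGen.head_induction_on with
    | refl => exact ⟨0, fun _ => w, rfl, rfl, fun _ _ => hz, by simp⟩
    | @head x y hxy _ ih =>
      obtain ⟨n, c, rfl, rfl, hc, hd⟩ := ih hxy.2.1
      refine ⟨n + 1, fun i => i.casesOn x c, rfl, rfl, ?_, ?_⟩
      · rintro (_ | i) hi
        exacts [hz, hc i (by lia)]
      · rintro (_ | i) hi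
        exacts [hxy.2.2, hd i (by lia)]

theorem catenaryDeg_eq_catenaryDegOn (d : RF H → RF H → ℕ) (a : H) :
    catenaryDeg d a = catenaryDegOn d (rigidFactorizations a) := by
  unfold catenaryDeg catenaryDegOn
  congr 1
  ext N
  constructor
  · exact fun h z hz w hw => (isNChain_iff_reflTransGen hz).1 (h z w hz.1 hw.1 hz.2 hw.2)
  · exact fun h z w hz hw hza hwa =>
      (isNChain_iff_reflTransGen ⟨hz, hza⟩).2 (h z ⟨hz, hza⟩ w ⟨hw, hwa⟩)

end CatenaryDegree

section MultisetDistance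

variable {α β : Type*}

theorem multiset_map_inter_of_injOn [DecidableEq α] [DecidableEq β] {f : α → β} {S : Set α}
    (hf : Set.InjOn f S) {s t : Multiset α} (hs : ∀ x ∈ s, x ∈ S) (ht : ∀ x ∈ t, x ∈ S) :
    (s ∩ t).map f = s.map f ∩ t.map f := by
  induction s using Multiset.induction_on generalizing t with
  | empty => simp
  | cons a s ih =>
    obtain ⟨ha, hs⟩ := Multiset.forall_mem_cons.1 hs
    by_cases hat : a ∈ t
    · obtain ⟨t, rfl⟩ := Multiset.exists_cons_of_mem hat
      simp [ih hs (Multiset.forall_mem_cons.1 ht).2]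
    · have hfat : f a ∉ t.map f := by
        intro h
        obtain ⟨b, hb, hba⟩ := Multiset.mem_map.1 h
        exact hat (hf (ht b hb) ha hba ▸ hb)
      rw [Multiset.map_cons, Multiset.cons_inter_of_neg _ hat,
        Multiset.cons_inter_of_neg _ hfat, ih hs ht]

theorem mdist_self (s : Multiset α) : mdist s s = 0 := by
  classical
  have h : s ∩ s = s := inf_idem s
  simp [mdist, h]

theorem mdist_map_of_injOn {f : α → β} {S : Set α} (hf : Set.InjOn f S) {s t : Multiset α}
    (hs : ∀ x ∈ s, x ∈ S) (ht : ∀ x ∈ t, x ∈ S) : mdist (s.map f) (t.map f) = mdist s t := by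
  classical
  simp only [mdist, ← multiset_map_inter_of_injOn hf hs ht, Multiset.card_map]

end MultisetDistance

section PermutableCatenaryDegree

variable {H : Type*} [Monoid H]

theorem cpDeg_eq_catenaryDegOn (a : H) :
    cpDeg a = catenaryDegOn mdist (permFactorizations a) := by
  calc cpDeg a = catenaryDeg dpRF a := rfl
    _ = catenaryDegOn dpRF (rigidFactorizations a) := catenaryDeg_eq_catenaryDegOn dpRF a
    _ = catenaryDegOn mdist (permFactorizations a) := by
      rw [permFactorizations_eq_image]
      exact (catenaryDegOn_image mdist_self fun _ _ _ _ => rfl).symm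

theorem TAssoc.cpDeg_eq {a b : H} (h : TAssoc a b) :
    cpDeg a = cpDeg b := by
  rw [cpDeg_eq_catenaryDegOn, cpDeg_eq_catenaryDegOn, h.permFactorizations_eq]

end PermutableCatenaryDegree

section TransferHomomorphisms

variable {H T : Type*} [Monoid H] [Monoid T] {φ : H →* T}

theorem IsIsoatomic.injOn_atomClasses (hi : IsIsoatomic φ) :
    Set.InjOn (AClass.map φ) (atomClasses H) := by
  rintro _ ⟨u, hu, rfl⟩ _ ⟨v, hv, rfl⟩ huv
  exact mkCls_eq_mkCls.2 (hi u v hu hv (mkCls_eq_mkCls.1 huv))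

theorem IsIsoatomic.dpRF_mapRF (hi : IsIsoatomic φ) {z w : RF H} (hz : z.IsRigid)
    (hw : w.IsRigid) : dpRF (mapRF φ z) (mapRF φ w) = dpRF z w := by
  simp only [dpRF, mapRF, clsList_map]
  exact mdist_map_of_injOn hi.injOn_atomClasses
    (forall_mem_clsList_mem_atomClasses.2 hz) (forall_mem_clsList_mem_atomClasses.2 hw)

theorem IsWeakTransferHom.permFactorizations_subset_image (hw : IsWeakTransferHom φ) (a : H) :
    permFactorizations (φ a) ⊆ Multiset.map (AClass.map φ) '' permFactorizations a := by
  rintro _ ⟨l, hl, hla, rfl⟩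
  rcases eq_or_ne l [] with rfl | hne
  · have ha : IsUnit a := (hw.1.2 a).1 (tassoc_one_left_iff.1 hla)
    exact ⟨_, ⟨[], by simp, tassoc_one_left_iff.2 ha, rfl⟩, rfl⟩
  obtain ⟨l', hcls, hprod⟩ := hla.exists_clsList_eq_prod_eq hne
  have hl' : ∀ v ∈ l', MAtom v := forall_mAtom_of_clsList_eq hl hcls
  have hne' : l' ≠ [] := by
    rintro rfl
    exact hne (by simpa [clsList] using hcls.symm)
  obtain ⟨u, σ, hu, ha, hσ⟩ := hw.2 a l'.length (List.length_pos_iff.2 hne') l'.get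
    (fun i => hl' _ (l'.get_mem i)) (by rw [List.ofFn_get, hprod])
  refine ⟨clsList (List.ofFn u), ⟨List.ofFn u, ?_, ha ▸ .refl a, rfl⟩, ?_⟩
  · simpa [List.mem_ofFn] using hu
  · calc (clsList (List.ofFn u)).map (AClass.map φ)
        = clsList (List.ofFn (φ ∘ u)) := by rw [← clsList_map, List.map_ofFn]
      _ = clsList (List.ofFn l'.get) := clsList_ofFn_eq_of_tassoc_perm σ hσ
      _ = clsList l := by rw [List.ofFn_get, hcls]

theorem IsWeakTransferHom.map_mAtom (hT : Atomic T) (hw : IsWeakTransferHom φ) {u : H}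
    (hu : MAtom u) : MAtom (φ u) := by
  obtain ⟨s, hs⟩ := hT.permFactorizations_nonempty (φ u)
  obtain ⟨r, hr, rfl⟩ := hw.permFactorizations_subset_image u hs
  obtain rfl : r = {mkCls u} := by rwa [hu.permFactorizations_eq] at hr
  exact mkCls_mem_atomClasses.1 <|
    mem_atomClasses_of_mem_permFactorizations hs _ (by simp [AClass.map_mkCls])

theorem IsWeakTransferHom.permFactorizations_map (hT : Atomic T) (hw : IsWeakTransferHom φ)
    (a : H) :
    permFactorizations (φ a) = Multiset.map (AClass.map φ) '' permFactorizations a := by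
  refine (hw.permFactorizations_subset_image a).antisymm ?_
  rintro _ ⟨_, ⟨l, hl, hla, rfl⟩, rfl⟩
  refine ⟨l.map φ, ?_, map_list_prod φ l ▸ hla.map φ, clsList_map φ l⟩
  exact List.forall_mem_map.2 fun u hu => hw.map_mAtom hT (hl u hu)

theorem IsWeakTransferHom.cpDeg_map (hT : Atomic T) (hw : IsWeakTransferHom φ)
    (hi : IsIsoatomic φ) (a : H) : cpDeg (φ a) = cpDeg a := by
  rw [cpDeg_eq_catenaryDegOn, cpDeg_eq_catenaryDegOn, hw.permFactorizations_map hT]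
  exact catenaryDegOn_image mdist_self fun s hs t ht =>
    mdist_map_of_injOn hi.injOn_atomClasses
      (mem_atomClasses_of_mem_permFactorizations hs)
      (mem_atomClasses_of_mem_permFactorizations ht)

theorem IsWeakTransferHom.cpMon_eq (hT : Atomic T) (hw : IsWeakTransferHom φ)
    (hi : IsIsoatomic φ) : cpMon H = cpMon T := by
  apply le_antisymm
  · refine iSup_le fun a => ?_
    rw [← hw.cpDeg_map hT hi a]
    exact le_iSup (cpDeg (H := T)) (φ a)
  · refine iSup_le fun t => ?_
    obtain ⟨ε, η, a, ha⟩ := hw.1.1 t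
    have hat : TAssoc (φ a) t := ⟨ε, η, ha⟩
    rw [← hat.cpDeg_eq, hw.cpDeg_map hT hi]
    exact le_iSup (cpDeg (H := H)) a

theorem dp_eq_of_isoatomic_weakTransfer_general (hT : Atomic T) (hw : IsWeakTransferHom φ)
    (hi : IsIsoatomic φ) :
    (∀ z w : RF H, z.IsRigid → w.IsRigid → dpRF z w = dpRF (mapRF φ z) (mapRF φ w)) ∧
      cpMon H = cpMon T :=
  ⟨fun _ _ hz hw' => (hi.dpRF_mapRF hz hw').symm, hw.cpMon_eq hT hi⟩

end TransferHomomorphisms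

/-- An isoatomic weak transfer homomorphism preserves the permutable
distance between (permutable) factorizations of an element; in particular the permutable
catenary degrees of `H` and `T` coincide. -/
theorem dp_eq_of_isoatomic_weakTransfer {H T : Type*} [CancelMonoid H] [CancelMonoid T]
    (hH : Atomic H) (hT : Atomic T) (φ : H →* T)
    (hw : IsWeakTransferHom φ) (hi : IsIsoatomic φ) :
    (∀ z w : RF H, z.IsRigid → w.IsRigid → z.prod = w.prod →
      dpRF z w = dpRF (mapRF φ z) (mapRF φ w)) ∧
    cpMon H = cpMon T := by
  have h := dp_eq_of_isoatomic_weakTransfer_general hT hw hi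
  exact ⟨fun z w hz hw' _ => h.1 z w hz hw', h.2⟩
end

section
/- Let H be a cancellative monoid, let ∣' be a divisibility relation on H, and let q be an almost prime-like element of H with respect to ∣'. Then: (1) if q ∣' a_1⋯a_m for some m ≥ 1 and a_1, …, a_m ∈ H, then q ∣' a_i for some i; (2) if q ∣' u_1⋯u_m for some m ≥ 1 and atoms u_1, …, u_m of H, then q ≃ u_i for some i; (3) if H is atomic, then q is an atom of H. -/
/-- A divisibility relation on a cancellative monoid. -/
structure IsDivRel (H : Type*) [Monoid H] (r : H → H → Prop) : Prop where
  dvd_mul : ∀ a b c : H, r a b ∨ r a c → r a (b * c)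
  dvd_unit_mul : ∀ (a : H) (ε η : Hˣ), r a ((ε : H) * a * (η : H))
  assoc_of_dvd_atom : ∀ a u : H, ¬ IsUnit a → MAtom u → r a u → TAssoc a u
  unit_of_dvd_unit : ∀ (a : H) (ε : Hˣ), r a (ε : H) → IsUnit a

/-- An almost prime-like element with respect to a divisibility relation `r`. -/
def AlmostPrimeLikeRel {H : Type*} [Monoid H] (r : H → H → Prop) (q : H) : Prop :=
  ¬ IsUnit q ∧ ∀ a b : H, r q (a * b) → r q a ∨ r q b

theorem MAtom.of_tAssoc {M : Type*} [Monoid M] {a u : M} (hu : MAtom u) (h : TAssoc a u) :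
    MAtom a := by
  obtain ⟨ε, η, rfl⟩ := h
  refine ⟨fun ha => hu.1 ((ε.isUnit.mul ha).mul η.isUnit), ?_⟩
  rintro b c rfl
  have hsplit : IsUnit (ε * b) ∨ IsUnit (c * η) := hu.2 _ _ (by simp only [mul_assoc])
  simpa only [Units.isUnit_units_mul, Units.isUnit_mul_units] using hsplit

theorem IsDivRel.refl {M : Type*} [Monoid M] {r : M → M → Prop} (hr : IsDivRel M r) (a : M) :
    r a a := by
  simpa only [Units.val_one, one_mul, mul_one] using hr.dvd_unit_mul a 1 1

theorem IsDivRel.not_rel_one {M : Type*} [Monoid M] {r : M → M → Prop} (hr : IsDivRel M r)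
    {a : M} (ha : ¬ IsUnit a) : ¬ r a 1 :=
  fun h => ha (hr.unit_of_dvd_unit a 1 h)

namespace AlmostPrimeLikeRel

variable {M : Type*} [Monoid M] {r : M → M → Prop} {q : M}

theorem exists_mem_rel_of_rel_prod (hq : AlmostPrimeLikeRel r q) (hr : IsDivRel M r)
    {l : List M} (h : r q l.prod) : ∃ a ∈ l, r q a := by
  by_contra! hl
  have not_rel_mul (a b : M) (ha : ¬ r q a) (hb : ¬ r q b) : ¬ r q (a * b) :=
    fun hab => (hq.2 a b hab).elim ha hb
  exact List.prod_induction (fun a => ¬ r q a) not_rel_mul (hr.not_rel_one hq.1) hl h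

theorem exists_mem_tAssoc_of_rel_prod (hq : AlmostPrimeLikeRel r q) (hr : IsDivRel M r)
    {l : List M} (hl : ∀ u ∈ l, MAtom u) (h : r q l.prod) : ∃ u ∈ l, TAssoc q u := by
  obtain ⟨u, hu, hqu⟩ := hq.exists_mem_rel_of_rel_prod hr h
  exact ⟨u, hu, hr.assoc_of_dvd_atom q u hq.1 (hl u hu) hqu⟩

theorem mAtom_of_eq_prod (hq : AlmostPrimeLikeRel r q) (hr : IsDivRel M r)
    {l : List M} (hl : ∀ u ∈ l, MAtom u) (h : q = l.prod) : MAtom q := by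
  have hql : r q l.prod := h ▸ hr.refl q
  obtain ⟨u, hu, hqu⟩ := hq.exists_mem_tAssoc_of_rel_prod hr hl hql
  exact (hl u hu).of_tAssoc hqu

end AlmostPrimeLikeRel

theorem almostPrimeLike_consequences_general {M : Type*} [Monoid M]
    (r : M → M → Prop) (hr : IsDivRel M r) (q : M) (hq : AlmostPrimeLikeRel r q) :
    (∀ l : List M, r q l.prod → ∃ a ∈ l, r q a) ∧
    (∀ l : List M, (∀ u ∈ l, MAtom u) → r q l.prod → ∃ u ∈ l, TAssoc q u) ∧
    (∀ l : List M, (∀ u ∈ l, MAtom u) → q = l.prod → MAtom q) :=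
  ⟨fun _ => hq.exists_mem_rel_of_rel_prod hr,
    fun _ => hq.exists_mem_tAssoc_of_rel_prod hr,
    fun _ => hq.mAtom_of_eq_prod hr⟩

/-- Consequences of being almost prime-like with respect to a
divisibility relation: dividing a product means dividing a factor; dividing a product of
atoms means being associated to one of them; and in an atomic monoid, almost prime-like
elements are atoms. -/
theorem almostPrimeLike_consequences {H : Type*} [CancelMonoid H]
    (r : H → H → Prop) (hr : IsDivRel H r) (q : H) (hq : AlmostPrimeLikeRel r q) :
    (∀ l : List H, l ≠ [] → r q l.prod → ∃ a ∈ l, r q a) ∧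
    (∀ l : List H, l ≠ [] → (∀ u ∈ l, MAtom u) → r q l.prod → ∃ u ∈ l, TAssoc q u) ∧
    (Atomic H → MAtom q) := by
  obtain ⟨mem_rel, mem_tAssoc, mAtom_of_eq_prod⟩ := almostPrimeLike_consequences_general r hr q hq
  exact ⟨fun l _ => mem_rel l, fun l _ => mem_tAssoc l, fun hH =>
    (hH q hq.1).elim fun l ⟨_, hl, h⟩ => mAtom_of_eq_prod l hl h⟩
end
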